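/- arXiv:1211.5118 — 2 statements merged into one kernel-verified Lean document; each statement's English description precedes it below -/
import Mathlib

section
/- If V is a trivial spectrum linear subspace of Mat_n(K), then dim V ≤ n(n−1)/2. -/
/-!
Some index `i` is such that no nonzero matrix of `V` is supported on row `i`. Otherwise collect one
nonzero row for each index into a matrix `M`: then `V` contains `diagonal d * M` for every `d`.
Among the nonempty index sets on which the relation `M i j ≠ 0` has successors, take a minimal one,
`C`. By minimality each `i ∈ C` has a single successor in `C`, so `M *ᵥ 1_C` vanishes nowhere on
`C`, and rescaling the rows yields a member of `V` that fixes `1_C`.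

For such an `i`, the `i`-th columns of the members of `V` form a proper subspace of `K ^ n`, as a
matrix whose `i`-th column is `e_i` fixes `e_i`. The members of `V` whose `i`-th column vanishes are
determined by what remains after deleting row and column `i`, and these minors again fix no nonzero
vector. Induction gives `dim V ≤ (n - 1) + (n - 1).choose 2 = n.choose 2`.
-/

open Matrix Module

theorem exists_nonempty_forall_existsUnique_of_forall_exists {ι : Type*} [Finite ι] [Nonempty ι]
    {R : ι → ι → Prop} (hR : ∀ i, ∃ j, R i j) :
    ∃ C : Set ι, C.Nonempty ∧ ∀ i ∈ C, ∃! j, j ∈ C ∧ R i j := by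
  obtain ⟨C, ⟨hne, hC⟩, hmin⟩ := exists_minimal_of_wellFoundedLT
    (fun C : Set ι ↦ C.Nonempty ∧ ∀ i ∈ C, ∃ j ∈ C, R i j)
    ⟨Set.univ, Set.univ_nonempty, fun i _ ↦ by simpa using hR i⟩
  have hpred (j : C) : ∃ i : C, ∀ k ∈ C, R i k → k = j := by
    -- Otherwise `C \ {j}` contradicts the minimality of `C`.
    by_contra! h
    choose k hkC hk hkj using h
    have hsub := hmin (y := C \ {↑j}) ⟨⟨k j, hkC j, hkj j⟩, fun i hi ↦
      ⟨k ⟨i, hi.1⟩, ⟨hkC _, hkj _⟩, hk ⟨i, hi.1⟩⟩⟩ Set.sdiff_subset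
    exact (hsub j.2).2 rfl
  choose pred hpred using hpred
  have hinj : pred.Injective := fun j j' h ↦ by
    obtain ⟨k, hk, hRk⟩ := hC _ (pred j).2
    exact Subtype.ext ((hpred j k hk hRk).symm.trans (hpred j' k hk (h ▸ hRk)))
  refine ⟨C, hne, fun i hi ↦ ?_⟩
  obtain ⟨j, hj⟩ := Finite.surjective_of_injective hinj ⟨i, hi⟩
  obtain ⟨k, hk, hRk⟩ := hC i hi
  have huniq (l : ι) (hl : l ∈ C) (hRl : R i l) : l = j := hpred j l hl (by rwa [hj])
  exact ⟨k, ⟨hk, hRk⟩, fun l hl ↦ (huniq l hl.1 hl.2).trans (huniq k hk hRk).symm⟩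

section Matrices

variable {K ι κ : Type*}

theorem diagonal_mul_eq_sum_smul_updateRow [NonUnitalNonAssocSemiring K] [Fintype ι]
    [DecidableEq ι] (d : ι → K) (M : Matrix ι κ K) :
    diagonal d * M = ∑ i, d i • (0 : Matrix ι κ K).updateRow i (M i) := by
  ext i j
  simp [Matrix.sum_apply, updateRow_apply]

theorem mulVec_eq_submatrix_mulVec_comp [NonUnitalNonAssocSemiring K] [Fintype ι] [Fintype κ]
    {m : Type*} {N : Matrix m ι K} {f : κ → ι} (hf : f.Injective)
    (hN : ∀ j ∉ Set.range f, N.col j = 0) (x : ι → K) :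
    N *ᵥ x = N.submatrix id f *ᵥ (x ∘ f) := by
  funext i
  refine (Fintype.sum_of_injective f hf _ _ (fun j hj ↦ ?_) fun _ ↦ rfl).symm
  have hij : N i j = 0 := congrFun (hN j hj) i
  simp [hij]

theorem exists_nonempty_forall_mulVec_indicator_ne_zero [NonAssocSemiring K] [Fintype ι]
    [Nonempty ι] {M : Matrix ι ι K} (hM : ∀ i, M i ≠ 0) :
    ∃ C : Set ι, C.Nonempty ∧ ∀ i ∈ C, (M *ᵥ C.indicator 1) i ≠ 0 := by
  classical
  obtain ⟨C, hne, hC⟩ := exists_nonempty_forall_existsUnique_of_forall_exists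
    fun i ↦ Function.ne_iff.1 (hM i)
  refine ⟨C, hne, fun i hi ↦ ?_⟩
  obtain ⟨j, ⟨hj, hij⟩, huniq⟩ := hC i hi
  have hsum : (M *ᵥ C.indicator 1) i = M i j := by
    rw [mulVec_apply_eq_sum, Fintype.sum_eq_single j fun k hkj ↦ ?_]
    · simp [hj]
    · by_cases hk : k ∈ C
      · have hik : M i k = 0 := by_contra fun h ↦ hkj (huniq k ⟨hk, h⟩)
        simp [hik]
      · simp [hk]
  rwa [hsum]

theorem exists_diagonal_mul_mulVec_eq_self [DivisionRing K] [Fintype ι] [Nonempty ι]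
    [DecidableEq ι] {M : Matrix ι ι K} (hM : ∀ i, M i ≠ 0) :
    ∃ (d : ι → K) (x : ι → K), x ≠ 0 ∧ (diagonal d * M) *ᵥ x = x := by
  classical
  obtain ⟨C, ⟨c, hc⟩, hC⟩ := exists_nonempty_forall_mulVec_indicator_ne_zero hM
  refine ⟨C.indicator (M *ᵥ C.indicator 1)⁻¹, C.indicator 1,
    Function.ne_iff.2 ⟨c, by simp [hc]⟩, ?_⟩
  funext i
  rw [← mulVec_mulVec, mulVec_diagonal]
  by_cases hi : i ∈ C
  · simp [hi, inv_mul_cancel₀ (hC i hi)]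
  · simp [hi]

/-- The `j`-th column of a matrix, as a linear map. -/
def columnMap (K ι : Type*) {κ : Type*} [Semiring K] (j : κ) : Matrix ι κ K →ₗ[K] ι → K :=
  LinearMap.pi fun i ↦ entryLinearMap K K i j

/-- Passage to the principal submatrix with rows and columns indexed by `f`, as a linear map. The
indices are thought of as distinct, but `f` need not be injective. -/
def principalSubmatrix (K : Type*) [Semiring K] (f : κ → ι) :
    Matrix ι ι K →ₗ[K] Matrix κ κ K where
  toFun N := N.submatrix f f
  map_add' _ _ := rfl
  map_smul' _ _ := rfl

theorem eq_updateRow_of_col_eq_zero_of_submatrix_eq_zero [Zero K] [DecidableEq ι]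
    {N : Matrix ι κ K} {i : ι} {j : κ} (hcol : N.col j = 0)
    (hsub : N.submatrix (Subtype.val : {a // a ≠ i} → ι) (Subtype.val : {b // b ≠ j} → κ) = 0) :
    N = (0 : Matrix ι κ K).updateRow i (N i) := by
  ext a b
  by_cases ha : a = i
  · simp [ha]
  by_cases hb : b = j
  · simpa [ha, hb] using congrFun hcol a
  · simpa [ha] using congrFun (congrFun hsub ⟨a, ha⟩) ⟨b, hb⟩

end Matrices

theorem finrank_map_add_finrank_inf_ker {K E F : Type*} [DivisionRing K] [AddCommGroup E]
    [Module K E] [AddCommGroup F] [Module K F] (f : E →ₗ[K] F) (V : Submodule K E)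
    [FiniteDimensional K V] :
    finrank K (V.map f) + finrank K ↥(V ⊓ LinearMap.ker f) = finrank K V := by
  rw [← LinearMap.range_domRestrict, ← Submodule.map_comap_subtype, ← LinearMap.ker_domRestrict,
    Submodule.finrank_map_subtype_eq]
  exact (f.domRestrict V).finrank_range_add_finrank_ker

theorem finrank_eq_add_of_updateRow_mem_imp_eq_zero {K ι : Type*} [DivisionRing K] [Finite ι]
    [DecidableEq ι] {V : Submodule K (Matrix ι ι K)} {i : ι}
    (hrow : ∀ r, (0 : Matrix ι ι K).updateRow i r ∈ V → r = 0) :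
    finrank K V = finrank K (V.map (columnMap K ι i)) +
      finrank K ((V ⊓ LinearMap.ker (columnMap K ι i)).map
        (principalSubmatrix K (Subtype.val : {j // j ≠ i} → ι))) := by
  set W := V ⊓ LinearMap.ker (columnMap K ι i)
  set minor := principalSubmatrix K (Subtype.val : {j // j ≠ i} → ι)
  have hker : W ⊓ LinearMap.ker minor = ⊥ := by
    refine (Submodule.eq_bot_iff _).2 ?_
    rintro N ⟨⟨hNV, hcol⟩, hsub⟩
    have hN := eq_updateRow_of_col_eq_zero_of_submatrix_eq_zero hcol hsub
    rw [hN, hrow (N i) (hN ▸ hNV)]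
    exact updateRow_eq_self 0 i
  have hminor := finrank_map_add_finrank_inf_ker minor W
  rw [hker, finrank_bot, add_zero] at hminor
  rw [hminor, finrank_map_add_finrank_inf_ker]

/-- The trivial spectrum property of a linear space `V` of square matrices. Only the eigenvalue `1`
is excluded: if `N *ᵥ x = μ • x` with `μ` invertible, then `μ⁻¹ • N`, which also lies in `V`,
fixes `x`. -/
def HasTrivialSpectrum {K ι : Type*} [Semiring K] [Fintype ι]
    (V : Submodule K (Matrix ι ι K)) : Prop :=
  ∀ N ∈ V, ∀ x : ι → K, N *ᵥ x = x → x = 0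

namespace HasTrivialSpectrum

variable {K ι κ : Type*} [Fintype ι] [Fintype κ]

theorem mono [Semiring K] {V W : Submodule K (Matrix ι ι K)} (hV : HasTrivialSpectrum V)
    (hWV : W ≤ V) : HasTrivialSpectrum W :=
  fun N hN ↦ hV N (hWV hN)

theorem map_principalSubmatrix [Semiring K] {V : Submodule K (Matrix ι ι K)}
    (hV : HasTrivialSpectrum V) {f : κ → ι} (hf : f.Injective)
    (hcol : ∀ N ∈ V, ∀ j ∉ Set.range f, N.col j = 0) :
    HasTrivialSpectrum (V.map (principalSubmatrix K f)) := by
  rintro _ ⟨N, hN, rfl⟩ y (hy : N.submatrix f f *ᵥ y = y)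
  -- `z` extends `y`: at the new indices its values are forced by the equation `N *ᵥ z = z`.
  let z := N.submatrix id f *ᵥ y
  have hzf : z ∘ f = y := hy
  have hNz : N *ᵥ z = z := by
    rw [mulVec_eq_submatrix_mulVec_comp hf (hcol N hN), hzf]
  rw [← hzf, hV N hN z hNz, Pi.zero_comp]

variable [DivisionRing K] {V : Submodule K (Matrix ι ι K)}

theorem exists_forall_updateRow_mem_imp_eq_zero [Nonempty ι] [DecidableEq ι]
    (hV : HasTrivialSpectrum V) :
    ∃ i, ∀ r, (0 : Matrix ι ι K).updateRow i r ∈ V → r = 0 := by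
  by_contra! h
  choose M hMV hM using h
  obtain ⟨d, x, hx, hfix⟩ := exists_diagonal_mul_mulVec_eq_self (M := of M) hM
  refine hx (hV _ ?_ x hfix)
  rw [diagonal_mul_eq_sum_smul_updateRow]
  exact V.sum_mem fun i _ ↦ V.smul_mem _ (hMV i)

theorem finrank_map_columnMap_lt (hV : HasTrivialSpectrum V) (i : ι) :
    finrank K (V.map (columnMap K ι i)) < Fintype.card ι := by
  classical
  rw [← finrank_fintype_fun_eq_card K]
  refine Submodule.finrank_lt fun htop ↦ ?_
  obtain ⟨N, hN, hcol⟩ : Pi.single i 1 ∈ V.map (columnMap K ι i) := htop ▸ Submodule.mem_top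
  have hzero := hV N hN (Pi.single i 1) (by rw [mulVec_single_one]; exact hcol)
  simpa using congrFun hzero i

end HasTrivialSpectrum

theorem stmt_3_general {K ι : Type*} [DivisionRing K] [Fintype ι]
    {V : Submodule K (Matrix ι ι K)} (hV : HasTrivialSpectrum V) :
    finrank K V ≤ (Fintype.card ι).choose 2 := by
  classical
  induction hn : Fintype.card ι generalizing ι with
  | zero =>
    have := Fintype.card_eq_zero_iff.1 hn
    simp [finrank_zero_of_subsingleton]
  | succ n ih =>
    have : Nonempty ι := Fintype.card_pos_iff.1 (by lia)
    obtain ⟨i, hrow⟩ := hV.exists_forall_updateRow_mem_imp_eq_zero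
    have hcol := hV.finrank_map_columnMap_lt i
    have hminors : HasTrivialSpectrum ((V ⊓ LinearMap.ker (columnMap K ι i)).map
        (principalSubmatrix K (Subtype.val : {j // j ≠ i} → ι))) :=
      (hV.mono inf_le_left).map_principalSubmatrix Subtype.val_injective
        fun N hN j hj ↦ by
          obtain rfl : j = i := by simpa using hj
          exact hN.2
    have hdim := ih hminors (by simp [hn])
    rw [finrank_eq_add_of_updateRow_mem_imp_eq_zero hrow, Nat.choose_succ_succ' n 1,
      Nat.choose_one_right]
    lia

theorem stmt_3 {K : Type*} [Field K] {n : ℕ}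
    (V : Submodule K (Matrix (Fin n) (Fin n) K))
    (hV : ∀ N ∈ V, ∀ μ : K, μ ≠ 0 → ∀ x : Fin n → K, N.mulVec x = μ • x → x = 0) :
    Module.finrank K V ≤ n * (n - 1) / 2 := by
  have hspec : HasTrivialSpectrum V := fun N hN x hx ↦
    hV N hN 1 one_ne_zero x (by rwa [one_smul])
  simpa [Nat.choose_two_right] using stmt_3_general hspec
end

section
/- If V is a linear subspace of Mat_n(K) consisting of nilpotent matrices, then dim V ≤ n(n−1)/2. (Gerstenhaber dimension bound.) -/
/-!
If `A`, `B` and `A + B` are nilpotent then `tr (A * B) = 0`. In a space `V` of nilpotent matrices,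
those whose entries strictly below the diagonal vanish form a subspace `W`, and nilpotency kills
their diagonal too. For `A ∈ W` and `B ∈ V` the trace of `A * B` is therefore the dot product of
the entries of `A` above the diagonal with those of `B` below it, so `W` embeds into the
annihilator of the image of `V` in the space of strictly lower entries. Rank-nullity for `V` then
bounds `dim V` by the dimension of that space.
-/

namespace Gerstenhaber

open Matrix Polynomial Module

theorem finrank_le_of_disjoint_ker_of_ker_orthogonal {K V W : Type*} [Field K]
    [AddCommGroup V] [Module K V] [FiniteDimensional K V]
    [AddCommGroup W] [Module K W] [FiniteDimensional K W]
    {f : V →ₗ[K] W} {g : V →ₗ[K] Dual K W} (hdisj : Disjoint (LinearMap.ker f) (LinearMap.ker g))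
    (horth : ∀ a ∈ LinearMap.ker f, ∀ b, g a (f b) = 0) : finrank K V ≤ finrank K W := by
  have hmap : (LinearMap.ker f).map g ≤ (LinearMap.range f).dualAnnihilator := by
    rintro _ ⟨a, ha, rfl⟩
    rw [Submodule.mem_dualAnnihilator]
    rintro _ ⟨b, rfl⟩
    exact horth a ha b
  have hinj : Function.Injective (g.domRestrict (LinearMap.ker f)) :=
    LinearMap.injective_domRestrict_iff.2 hdisj
  calc
    finrank K V = finrank K (LinearMap.range f) + finrank K (LinearMap.ker f) :=
      f.finrank_range_add_finrank_ker.symm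
    _ = finrank K (LinearMap.range f) + finrank K ((LinearMap.ker f).map g) := by
      rw [← LinearMap.range_domRestrict, LinearMap.finrank_range_of_inj hinj]
    _ ≤ finrank K (LinearMap.range f) + finrank K (LinearMap.range f).dualAnnihilator := by
      gcongr
      exact Submodule.finrank_mono hmap
    _ = finrank K W := Subspace.finrank_add_finrank_dualAnnihilator_eq _

theorem map_evalRingHom_zero_one_sub_X_smul {R ι : Type*} [CommRing R] [DecidableEq ι]
    (A : Matrix ι ι R[X]) : (1 - (X : R[X]) • A).map (evalRingHom 0) = 1 := by
  rw [Matrix.map_sub _ (map_sub _), Matrix.map_one _ (map_zero _) (map_one _), sub_eq_self]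
  ext i j
  simp

section Nilpotent

variable {R ι : Type*} [CommRing R] [Fintype ι] [DecidableEq ι]

theorem dvd_trace_of_det_one_add_smul_eq_one {r : R} (hr : IsLeftRegular r) {M : Matrix ι ι R}
    (h : (1 + r • M).det = 1) : r ∣ M.trace := by
  obtain ⟨s, hs⟩ : ∃ s, (1 + r • M).det = 1 + M.trace * r + s * r ^ 2 := ⟨_, det_one_add_smul r M⟩
  refine ⟨-s, hr ?_⟩
  linear_combination h - hs

theorem one_sub_X_smul_mul_one_sub_X_smul (A B : Matrix ι ι R) :
    (1 - (X : R[X]) • A.map C) * (1 - (X : R[X]) • B.map C) =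
      1 - (X : R[X]) • (A + B).map C + (X ^ 2 : R[X]) • (A * B).map C := by
  rw [Matrix.map_mul, Matrix.map_add _ (map_add C)]
  simp only [sub_mul, mul_sub, one_mul, mul_one, smul_mul_smul_comm, smul_add, sq]
  abel

variable [IsReduced R] {A B : Matrix ι ι R}

theorem charpoly_eq_X_pow_card_of_isNilpotent (hA : IsNilpotent A) :
    A.charpoly = X ^ Fintype.card ι := by
  have hcoeff := Polynomial.isNilpotent_iff.1 (isNilpotent_charpoly_sub_pow_of_isNilpotent hA)
  exact sub_eq_zero.1 <| Polynomial.ext fun k ↦ (hcoeff k).eq_zero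

theorem charpolyRev_eq_one_of_isNilpotent (hA : IsNilpotent A) : A.charpolyRev = 1 := by
  rw [← reverse_charpoly, charpoly_eq_X_pow_card_of_isNilpotent hA, ← one_mul (X ^ _),
    reverse_mul_X_pow, ← C_1, reverse_C]

/-- The idea that works in every characteristic: `(1 - XA)(1 - XB) = (1 - X(A + B))(1 + X²E)` with
`E ≡ AB` modulo `X`, and comparing determinants yields `X² ∣ tr E`. -/
theorem trace_mul_eq_zero_of_isNilpotent_add (hA : IsNilpotent A) (hB : IsNilpotent B)
    (hAB : IsNilpotent (A + B)) : (A * B).trace = 0 := by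
  set P : Matrix ι ι R[X] := 1 - (X : R[X]) • (A + B).map C with hP
  have hPdet : P.det = 1 := charpolyRev_eq_one_of_isNilpotent hAB
  obtain ⟨E, hE⟩ : ∃ E, P * E = (A * B).map C :=
    ⟨P⁻¹ * (A * B).map C, mul_nonsing_inv_cancel_left _ _ (by simp [hPdet])⟩
  have hfactor : P * (1 + (X ^ 2 : R[X]) • E) =
      (1 - (X : R[X]) • A.map C) * (1 - (X : R[X]) • B.map C) := by
    rw [one_sub_X_smul_mul_one_sub_X_smul, mul_add, mul_one, mul_smul_comm, hE]
  have hdet : (1 + (X ^ 2 : R[X]) • E).det = 1 :=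
    calc
      (1 + (X ^ 2 : R[X]) • E).det = (P * (1 + (X ^ 2 : R[X]) • E)).det := by
        rw [det_mul, hPdet, one_mul]
      _ = A.charpolyRev * B.charpolyRev := by rw [hfactor, det_mul, charpolyRev, charpolyRev]
      _ = 1 := by
        rw [charpolyRev_eq_one_of_isNilpotent hA, charpolyRev_eq_one_of_isNilpotent hB, one_mul]
  have hdvd : X ∣ E.trace :=
    (dvd_pow_self X two_ne_zero).trans
      (dvd_trace_of_det_one_add_smul_eq_one (isRegular_X_pow 2).left hdet)
  have hE0 : E.map (evalRingHom 0) = A * B :=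
    calc
      E.map (evalRingHom 0) = P.map (evalRingHom 0) * E.map (evalRingHom 0) := by
        rw [hP, map_evalRingHom_zero_one_sub_X_smul, one_mul]
      _ = ((A * B).map C).map (evalRingHom 0) := by rw [← Matrix.map_mul, hE]
      _ = A * B := Matrix.ext fun i j ↦ eval_C
  calc
    (A * B).trace = (E.map (evalRingHom 0)).trace := by rw [hE0]
    _ = E.trace.eval 0 := (AddMonoidHom.map_trace (evalRingHom 0) E).symm
    _ = 0 := by rwa [← coeff_zero_eq_eval_zero, ← X_dvd_iff]

theorem diag_eq_zero_of_isNilpotent_of_isUpperTriangular {ι : Type*} [Fintype ι] [LinearOrder ι]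
    {A : Matrix ι ι R} (hA : IsNilpotent A) (hupper : A.IsUpperTriangular) : A.diag = 0 := by
  ext i
  have hroot : A.charpoly.eval (A i i) = 0 := by
    rw [charpoly_of_isUpperTriangular A hupper, eval_prod]
    exact Finset.prod_eq_zero (Finset.mem_univ i) (by simp)
  rw [charpoly_eq_X_pow_card_of_isNilpotent hA, eval_pow, eval_X] at hroot
  exact eq_zero_of_pow_eq_zero hroot

end Nilpotent

section OffDiagonal

variable (R ι : Type*) [Semiring R] [LinearOrder ι]

/-- The entries of a square matrix strictly above the diagonal, indexed by the pairs `i < j`. -/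
def upperEntries : Matrix ι ι R →ₗ[R] ({p : ι × ι // p.1 < p.2} → R) where
  toFun A p := A p.1.1 p.1.2
  map_add' _ _ := rfl
  map_smul' _ _ := rfl

/-- The entries of a square matrix strictly below the diagonal. They are indexed by the pairs
`i < j` as well, the entry at `(i, j)` being `A j i`, so that they can be paired with
`upperEntries`. -/
def lowerEntries : Matrix ι ι R →ₗ[R] ({p : ι × ι // p.1 < p.2} → R) where
  toFun A p := A p.1.2 p.1.1
  map_add' _ _ := rfl
  map_smul' _ _ := rfl

variable {R ι} {A : Matrix ι ι R}

theorem isUpperTriangular_of_lowerEntries_eq_zero (h : lowerEntries R ι A = 0) :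
    A.IsUpperTriangular :=
  fun i j hji ↦ congrFun h ⟨(j, i), hji⟩

theorem eq_zero_of_upperEntries_eq_zero (hupper : A.IsUpperTriangular) (hdiag : A.diag = 0)
    (h : upperEntries R ι A = 0) : A = 0 := by
  ext i j
  rcases lt_trichotomy i j with hij | rfl | hji
  · exact congrFun h ⟨(i, j), hij⟩
  · exact congrFun hdiag i
  · exact hupper hji

theorem upperEntries_dotProduct_lowerEntries [Fintype ι] (hupper : A.IsUpperTriangular)
    (hdiag : A.diag = 0) (B : Matrix ι ι R) :
    upperEntries R ι A ⬝ᵥ lowerEntries R ι B = (A * B).trace := by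
  have hvanish : ∀ p : ι × ι, A p.1 p.2 * B p.2 p.1 ≠ 0 → p.1 < p.2 := by
    intro p hp
    by_contra! hle
    rcases hle.lt_or_eq with hlt | heq
    · simp [hupper hlt] at hp
    · have hAp : A p.1 p.1 = 0 := congrFun hdiag p.1
      simp [heq, hAp] at hp
  calc
    upperEntries R ι A ⬝ᵥ lowerEntries R ι B = ∑ p : ι × ι with p.1 < p.2, A p.1 p.2 * B p.2 p.1 :=
      (Finset.sum_subtype {p : ι × ι | p.1 < p.2} (by simp) fun p ↦ A p.1 p.2 * B p.2 p.1).symm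
    _ = ∑ p : ι × ι, A p.1 p.2 * B p.2 p.1 := Finset.sum_filter_of_ne fun p _ ↦ hvanish p
    _ = (A * B).trace := Fintype.sum_prod_type _

end OffDiagonal

theorem finrank_le_choose_two_of_linearOrder {K ι : Type*} [Field K] [Fintype ι] [LinearOrder ι]
    (V : Submodule K (Matrix ι ι K)) (hnil : ∀ N ∈ V, IsNilpotent N) :
    finrank K V ≤ (Fintype.card ι).choose 2 := by
  let f := (lowerEntries K ι).domRestrict V
  let g := (dotProductEquiv K _).toLinearMap ∘ₗ (upperEntries K ι).domRestrict V
  have hupper : ∀ N : V, N ∈ LinearMap.ker f → N.1.IsUpperTriangular := fun N hN ↦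
    isUpperTriangular_of_lowerEntries_eq_zero hN
  have hdiag : ∀ N : V, N ∈ LinearMap.ker f → N.1.diag = 0 := fun N hN ↦
    diag_eq_zero_of_isNilpotent_of_isUpperTriangular (hnil N N.2) (hupper N hN)
  have hdisj : Disjoint (LinearMap.ker f) (LinearMap.ker g) :=
    Submodule.disjoint_def.2 fun N hf hg ↦ Subtype.ext <|
      eq_zero_of_upperEntries_eq_zero (hupper N hf) (hdiag N hf)
        ((dotProductEquiv K _).map_eq_zero_iff.1 hg)
  have horth : ∀ M ∈ LinearMap.ker f, ∀ N, g M (f N) = 0 := fun M hM N ↦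
    (upperEntries_dotProduct_lowerEntries (hupper M hM) (hdiag M hM) N.1).trans
      (trace_mul_eq_zero_of_isNilpotent_add (hnil M M.2) (hnil N N.2) (hnil _ (M + N).2))
  calc
    finrank K V ≤ finrank K ({p : ι × ι // p.1 < p.2} → K) :=
      finrank_le_of_disjoint_ker_of_ker_orthogonal hdisj horth
    _ = (Fintype.card ι).choose 2 := by
      rw [finrank_fintype_fun_eq_card, Fintype.card_subtype, Fintype.card_product_filter_lt]

end Gerstenhaber

theorem stmt_4_general {K ι : Type*} [Field K] [Fintype ι] [DecidableEq ι]
    (V : Submodule K (Matrix ι ι K)) (hnil : ∀ N ∈ V, IsNilpotent N) :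
    Module.finrank K V ≤ (Fintype.card ι).choose 2 := by
  let : LinearOrder ι := LinearOrder.lift' _ (Fintype.equivFin ι).injective
  exact Gerstenhaber.finrank_le_choose_two_of_linearOrder V fun N hN ↦ by convert hnil N hN

theorem stmt_4 {K : Type*} [Field K] {n : ℕ}
    (V : Submodule K (Matrix (Fin n) (Fin n) K))
    (hnil : ∀ N ∈ V, N ^ n = 0) :
    Module.finrank K V ≤ n * (n - 1) / 2 := by
  simpa only [Fintype.card_fin, Nat.choose_two_right] using
    stmt_4_general V fun N hN ↦ ⟨n, hnil N hN⟩
end
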